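/- Let μ ∈ (−1, 1) and 0 ≤ δ ≤ 1 − μ². Let P be a Borel probability measure on ℝ with P([−1, 1]) = 1, mean ∫ z dP(z) = μ, and mean absolute deviation ∫ |z − μ| dP(z) ≤ δ. Then for every λ ∈ ℝ, ∫ exp(λz) dP(z) ≤ (δ/(2(1 + μ)))·exp(−λ) + (δ/(2(1 − μ)))·exp(λ) + (1 − δ/(2(1 + μ)) − δ/(2(1 − μ)))·exp(μλ). -/

import Mathlib

open MeasureTheory Real

open Set

/-!
On `[a, b]` a convex function `f` lies below the piecewise linear function through its values at
`a`, `m` and `b`. That function has the form `z ↦ f m + p * (z - m) + q * |z - m|`, and `0 ≤ q`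
by convexity, so integrating it against a law with mean `m` annihilates the linear term and leaves
a bound that is monotone in the mean absolute deviation.
-/

/-- The piecewise linear interpolation of `f` at the nodes `a < m < b`, the function dominating a
convex `f` on `[a, b]`. It is encoded through the two slopes at `m` and `|z - m|`, rather than by
cases, so that its integral only involves the mean and the mean absolute deviation. -/
noncomputable def kinkedChord (f : ℝ → ℝ) (a m b z : ℝ) : ℝ :=
  f m + (slope f m a + slope f m b) / 2 * (z - m) + (slope f m b - slope f m a) / 2 * |z - m|

section Convex

variable {f : ℝ → ℝ} {a m b z : ℝ}

lemma kinkedChord_of_le (hz : z ≤ m) : kinkedChord f a m b z = f m + slope f m a * (z - m) := by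
  rw [kinkedChord, abs_of_nonpos (sub_nonpos.2 hz)]
  ring

lemma kinkedChord_of_ge (hz : m ≤ z) : kinkedChord f a m b z = f m + slope f m b * (z - m) := by
  rw [kinkedChord, abs_of_nonneg (sub_nonneg.2 hz)]
  ring

lemma slope_left_le_slope_right (hf : ConvexOn ℝ (Icc a b) f) (hm : m ∈ Ioo a b) :
    slope f m a ≤ slope f m b := by
  have hab : a ≤ b := (hm.1.trans hm.2).le
  exact hf.slope_mono (Ioo_subset_Icc_self hm) ⟨left_mem_Icc.2 hab, hm.1.ne⟩
    ⟨right_mem_Icc.2 hab, hm.2.ne'⟩ hab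

lemma le_kinkedChord (hf : ConvexOn ℝ (Icc a b) f) (hm : m ∈ Ioo a b) (hz : z ∈ Icc a b) :
    f z ≤ kinkedChord f a m b z := by
  have hab : a ≤ b := hz.1.trans hz.2
  have hmono := hf.slope_mono (Ioo_subset_Icc_self hm)
  have hfz : f z = f m + slope f m z * (z - m) := by
    have := sub_smul_slope f m z
    simp only [smul_eq_mul, vsub_eq_sub] at this
    linarith
  rcases lt_trichotomy z m with hzm | rfl | hmz
  · have hslope : slope f m a ≤ slope f m z :=
      hmono ⟨left_mem_Icc.2 hab, hm.1.ne⟩ ⟨hz, hzm.ne⟩ hz.1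
    rw [kinkedChord_of_le hzm.le, hfz]
    exact add_le_add_right (mul_le_mul_of_nonpos_right hslope (sub_nonpos.2 hzm.le)) (f m)
  · simp [kinkedChord]
  · have hslope : slope f m z ≤ slope f m b :=
      hmono ⟨hz, hmz.ne'⟩ ⟨right_mem_Icc.2 hab, hm.2.ne'⟩ hz.2
    rw [kinkedChord_of_ge hmz.le, hfz]
    exact add_le_add_right (mul_le_mul_of_nonneg_right hslope (sub_nonneg.2 hmz.le)) (f m)

lemma add_slope_sub_slope_mul_eq (hm : m ∈ Ioo a b) (δ : ℝ) :
    f m + (slope f m b - slope f m a) / 2 * δ =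
      δ / (2 * (m - a)) * f a + δ / (2 * (b - m)) * f b +
        (1 - δ / (2 * (m - a)) - δ / (2 * (b - m))) * f m := by
  have ha : m - a ≠ 0 := (sub_pos.2 hm.1).ne'
  have hb : b - m ≠ 0 := (sub_pos.2 hm.2).ne'
  rw [slope_comm f m a, slope_def_field, slope_def_field]
  field_simp
  ring

end Convex

section Integral

variable {Ω : Type*} [MeasurableSpace Ω] {P : Measure Ω} {X : Ω → ℝ} {f : ℝ → ℝ} {a m b δ : ℝ}

lemma integrable_kinkedChord [IsFiniteMeasure P] (hX : Integrable X P) :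
    Integrable (fun ω ↦ kinkedChord f a m b (X ω)) P := by
  have hdev : Integrable (fun ω ↦ X ω - m) P := hX.sub (integrable_const m)
  exact ((integrable_const _).add (hdev.const_mul _)).add (hdev.abs.const_mul _)

lemma integral_kinkedChord [IsProbabilityMeasure P] (hX : Integrable X P)
    (hmean : ∫ ω, X ω ∂P = m) :
    ∫ ω, kinkedChord f a m b (X ω) ∂P =
      f m + (slope f m b - slope f m a) / 2 * ∫ ω, |X ω - m| ∂P := by
  have hdev : Integrable (fun ω ↦ X ω - m) P := hX.sub (integrable_const m)
  have hcentered : ∫ ω, (X ω - m) ∂P = 0 := by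
    simp [integral_sub hX (integrable_const m), hmean]
  have haffine (p : ℝ) : ∫ ω, (f m + p * (X ω - m)) ∂P = f m := by
    simp [integral_add (integrable_const _) (hdev.const_mul p), integral_const_mul, hcentered]
  simp only [kinkedChord]
  rw [integral_add (by fun_prop) (by fun_prop), haffine, integral_const_mul]

theorem exp_moment_le_mad_bound_general [IsProbabilityMeasure P]
    (hf : ConvexOn ℝ (Icc a b) f) (hm : m ∈ Ioo a b)
    (hX : AEMeasurable X P) (hsupp : ∀ᵐ ω ∂P, X ω ∈ Icc a b)
    (hfX : Integrable (fun ω ↦ f (X ω)) P)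
    (hmean : ∫ ω, X ω ∂P = m) (hmad : ∫ ω, |X ω - m| ∂P ≤ δ) :
    ∫ ω, f (X ω) ∂P ≤
      δ / (2 * (m - a)) * f a + δ / (2 * (b - m)) * f b +
        (1 - δ / (2 * (m - a)) - δ / (2 * (b - m))) * f m := by
  have hXint : Integrable X P := .of_mem_Icc a b hX hsupp
  have hcoeff : 0 ≤ (slope f m b - slope f m a) / 2 :=
    div_nonneg (sub_nonneg.2 (slope_left_le_slope_right hf hm)) zero_le_two
  calc ∫ ω, f (X ω) ∂P
      ≤ ∫ ω, kinkedChord f a m b (X ω) ∂P :=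
        integral_mono_ae hfX (integrable_kinkedChord hXint)
          (hsupp.mono fun _ hω ↦ le_kinkedChord hf hm hω)
    _ = f m + (slope f m b - slope f m a) / 2 * ∫ ω, |X ω - m| ∂P :=
        integral_kinkedChord hXint hmean
    _ ≤ f m + (slope f m b - slope f m a) / 2 * δ := by gcongr
    _ = _ := add_slope_sub_slope_mul_eq hm δ

end Integral

lemma convexOn_exp_mul (l : ℝ) : ConvexOn ℝ univ fun z ↦ exp (l * z) :=
  convexOn_exp.comp_linearMap (LinearMap.mul ℝ ℝ l)

/-- Worst-case exponential moment bound for the ambiguity set `F₂` of distributions supported on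
`[−1, 1]` with mean `μ` and mean absolute deviation at most `δ`: for every such `P` and every
`λ ∈ ℝ`,
`∫ exp (λ z) dP(z) ≤ (δ/(2(1+μ)))·e^{−λ} + (δ/(2(1−μ)))·e^{λ} + (1 − δ/(2(1+μ)) − δ/(2(1−μ)))·e^{μλ}`. -/
theorem exp_moment_le_mad_bound
    (μ δ : ℝ) (hμ₁ : -1 < μ) (hμ₂ : μ < 1) (hδ₀ : 0 ≤ δ) (hδ : δ ≤ 1 - μ ^ 2)
    (P : Measure ℝ) [IsProbabilityMeasure P]
    (hsupp : P (Set.Icc (-1 : ℝ) 1) = 1)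
    (hmean : (∫ z, z ∂P) = μ)
    (hmad : (∫ z, |z - μ| ∂P) ≤ δ) :
    ∀ l : ℝ,
      (∫ z, Real.exp (l * z) ∂P) ≤
        (δ / (2 * (1 + μ))) * Real.exp (-l) + (δ / (2 * (1 - μ))) * Real.exp l +
          (1 - δ / (2 * (1 + μ)) - δ / (2 * (1 - μ))) * Real.exp (μ * l) := by
  intro l
  have hae : ∀ᵐ z ∂P, z ∈ Icc (-1 : ℝ) 1 :=
    (mem_ae_iff_prob_eq_one measurableSet_Icc).2 hsupp
  have hbound := exp_moment_le_mad_bound_general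
    ((convexOn_exp_mul l).subset (subset_univ _) (convex_Icc (-1) 1)) ⟨hμ₁, hμ₂⟩ aemeasurable_id
    hae (ProbabilityTheory.integrable_exp_mul_of_mem_Icc aemeasurable_id hae) hmean hmad
  simpa only [id, sub_neg_eq_add, add_comm μ 1, mul_neg, mul_one, mul_comm l μ] using hbound
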